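/- arXiv:2503.23192 — 2 statements merged into one kernel-verified Lean document; each statement's English description precedes it below -/
import Mathlib

section
/- Let R be a commutative ring and 0 → M → M' → M'' → 0 a short exact sequence of finitely presented torsion R-modules with pd_R(M') ≤ 1. Then Fitt_R(M) = Fitt_R(M') · Fitt^{[1]}_R(M''), where Fitt^{[1]}_R is Kataoka's first shifted Fitting ideal. -/
/-!
Let `Y = M' ×_{M''} X₁`. It sits in two exact sequences `0 → M → Y → X₁ → 0` and
`0 → N' → Y → M' → 0`, so the theorem follows by computing `Fitt(Y)` twice, once one knows that
the Fitting ideal is multiplicative on `0 → A → B → P → 0` whenever `P` is a finitely generated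
torsion module of projective dimension at most one (`fittingIdeal0_eq_mul`).

The inclusion `Fitt(A) Fitt(P) ⊆ Fitt(B)` holds for every exact sequence: lift relations and use
block triangular matrices. For the converse, take generators `x` of `A` and `y` of `B`. A relation
matrix of `B` for the generators `(x, y)` has the form `(U; V)`, the columns of `V` being relations
of `P`. The module `K` of relations of `P` is projective (Schanuel), so there is a linear map `C`
with `(C v, v)` a relation of `B` for all `v ∈ K`; then `U' = U - C V` consists of relations of `A`.
Although `C` is defined only on `K`, torsion gives a non-zero-divisor `s` such that `s C` is
the restriction of a matrix. Hence `s ^ m det (U; V) = s ^ m det (U'; V)` by row operations,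
and `s ^ m` cancels. Laplace expansion of `det (U'; V)` along the rows of `U'` then places it in
`Fitt(A) Fitt(P)`. No localization is needed.
-/

/-- The 0-th Fitting ideal of a module `M` over a commutative ring `R`. -/
def fittingIdeal0 (R : Type*) [CommRing R] (M : Type*) [AddCommGroup M] [Module R M] :
    Ideal R :=
  Ideal.span { r : R | ∃ (n : ℕ) (π : (Fin n → R) →ₗ[R] M) (A : Matrix (Fin n) (Fin n) R),
    Function.Surjective π ∧ (∀ j, π (fun i => A i j) = 0) ∧ r = A.det }

/-- `M` has projective dimension at most `1` over `R` (via a length-one resolution by a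
finite free module and a projective kernel). -/
def PdLeOne (R : Type*) [CommRing R] (M : Type*) [AddCommGroup M] [Module R M] : Prop :=
  ∃ (n : ℕ) (s : (Fin n → R) →ₗ[R] M),
    Function.Surjective s ∧ Module.Projective R (LinearMap.ker s)

open scoped nonZeroDivisors

/-- The determinants defining the Fitting ideal may be indexed by any finite type. -/
theorem det_mem_fittingIdeal0 {R : Type*} [CommRing R] {M : Type*} [AddCommGroup M] [Module R M]
    {ι : Type*} [Fintype ι] [DecidableEq ι] (π : (ι → R) →ₗ[R] M) (A : Matrix ι ι R)
    (hπ : Function.Surjective π) (hA : ∀ j, π (fun i => A i j) = 0) :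
    A.det ∈ fittingIdeal0 R M := by
  let e := Fintype.equivFin ι
  refine Ideal.subset_span ⟨Fintype.card ι, π ∘ₗ (LinearEquiv.funCongrLeft R R e).toLinearMap,
    A.submatrix e.symm e.symm, ?_, ?_, ?_⟩
  · exact hπ.comp (LinearEquiv.funCongrLeft R R e).surjective
  · intro j
    rw [← hA (e.symm j)]
    simp only [LinearMap.comp_apply, LinearEquiv.coe_coe]
    congr 1
    ext i
    simp [LinearEquiv.funCongrLeft_apply, LinearMap.funLeft]
  · rw [Matrix.det_submatrix_equiv_self]

/-- Laplace expansion along the rows of `U`, in the form of an ideal membership. -/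
theorem det_fromRows_mem_mul {R : Type*} [CommRing R] {ι κ : Type*} [Fintype ι] [DecidableEq ι]
    [Fintype κ] [DecidableEq κ] (U : Matrix ι (ι ⊕ κ) R) (V : Matrix κ (ι ⊕ κ) R) (I J : Ideal R)
    (hU : ∀ e : ι → ι ⊕ κ, (U.submatrix id e).det ∈ I)
    (hV : ∀ e : κ → ι ⊕ κ, (V.submatrix id e).det ∈ J) :
    (Matrix.fromRows U V).det ∈ I * J := by
  classical
  let a : ι ⊕ κ → ι ⊕ κ → R := fun j => Sum.elim (fun i => U i j) 0
  let b : ι ⊕ κ → ι ⊕ κ → R := fun j => Sum.elim 0 (fun i => V i j)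
  have hab : (Matrix.fromRows U V).transpose = Matrix.of (a + b) := by
    ext j (i | i) <;> simp [a, b]
  have key : (Matrix.fromRows U V).det =
      ∑ S : Finset (ι ⊕ κ), (Matrix.of (S.piecewise a b)).det := by
    rw [← Matrix.det_transpose, hab]
    exact (Matrix.detRowAlternating (n := ι ⊕ κ) (R := R)).toMultilinearMap.map_add_univ a b
  rw [key]
  refine Ideal.sum_mem _ fun S _ => ?_
  by_cases h0 : (Matrix.of (S.piecewise a b)).det = 0
  · rw [h0]; exact zero_mem _
  -- A nonzero Leibniz term matches the columns in `S` with the rows of `U`, which makes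
  -- the matrix block diagonal after permuting its columns.
  rw [Matrix.det_apply] at h0
  obtain ⟨σ, -, hσ⟩ := Finset.exists_ne_zero_of_sum_ne_zero h0
  have hne : ∀ j, S.piecewise a b (σ j) j ≠ 0 := by
    intro j hj
    apply hσ
    rw [Finset.prod_eq_zero (Finset.mem_univ j) (by simpa using hj), smul_zero]
  have hl : ∀ i, σ (Sum.inl i) ∈ S := by
    intro i
    by_contra h
    exact hne (Sum.inl i) (by simp [Finset.piecewise_eq_of_notMem _ _ _ h, b])
  have hr : ∀ i, σ (Sum.inr i) ∉ S := by
    intro i h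
    exact hne (Sum.inr i) (by simp [Finset.piecewise_eq_of_mem _ _ _ h, a])
  have hblock : (Matrix.of (S.piecewise a b)).submatrix σ id =
      Matrix.fromBlocks (U.submatrix id (σ ∘ Sum.inl)).transpose 0 0
        (V.submatrix id (σ ∘ Sum.inr)).transpose := by
    ext (i | i) (j | j)
    · simp [Finset.piecewise_eq_of_mem _ _ _ (hl i), a]
    · simp [Finset.piecewise_eq_of_mem _ _ _ (hl i), a]
    · simp [Finset.piecewise_eq_of_notMem _ _ _ (hr i), b]
    · simp [Finset.piecewise_eq_of_notMem _ _ _ (hr i), b]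
  have hdet := Matrix.det_permute σ (Matrix.of (S.piecewise a b))
  rw [hblock, Matrix.det_fromBlocks_zero₂₁, Matrix.det_transpose, Matrix.det_transpose] at hdet
  have hmem := Ideal.mul_mem_mul (hU (σ ∘ Sum.inl)) (hV (σ ∘ Sum.inr))
  rw [hdet] at hmem
  have h2 := Ideal.mul_mem_left _ ((Equiv.Perm.sign σ : ℤ) : R) hmem
  rwa [← mul_assoc, ← Int.cast_mul, ← Units.val_mul, Int.units_mul_self, Units.val_one,
    Int.cast_one, one_mul] at h2

/-- A common annihilator for a finitely generated torsion module. -/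
theorem exists_nonZeroDivisor_smul_eq_zero {R : Type*} [CommRing R] {P : Type*} [AddCommGroup P]
    [Module R P] (ht : Module.IsTorsion R P) {κ : Type*} [Fintype κ] (p : κ → P) :
    ∃ s ∈ R⁰, ∀ i, s • p i = 0 := by
  classical
  choose t h using fun i => @ht (p i)
  refine ⟨∏ i, (t i : R), Submonoid.prod_mem _ fun i _ => (t i).2, fun i => ?_⟩
  rw [← Finset.prod_erase_mul _ _ (Finset.mem_univ i), mul_smul]
  have : (t i : R) • p i = 0 := h i
  rw [this, smul_zero]

/-- A form of Schanuel's lemma: if one finite free cover of `P` has projective kernel, then so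
does every other. -/
theorem PdLeOne.projective_ker {R : Type*} [CommRing R] {P : Type*} [AddCommGroup P] [Module R P]
    (h : PdLeOne R P) {N : ℕ} (t : (Fin N → R) →ₗ[R] P) (ht : Function.Surjective t) :
    Module.Projective R (LinearMap.ker t) := by
  obtain ⟨n, s, hs, hK⟩ := h
  obtain ⟨φ, hφ⟩ := Module.projective_lifting_property s t hs
  obtain ⟨ψ, hψ⟩ := Module.projective_lifting_property t s ht
  have hφ' : ∀ v, s (φ v) = t v := fun v => LinearMap.congr_fun hφ v
  have hψ' : ∀ v, t (ψ v) = s v := fun v => LinearMap.congr_fun hψ v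
  -- The identity of `ker t` factors through `(Fin N → R) × ker s`, as `v = (v - ψ φ v) + ψ φ v`.
  let α : (Fin N → R) →ₗ[R] LinearMap.ker t :=
    LinearMap.codRestrict _ (LinearMap.id - ψ ∘ₗ φ) (by intro v; simp [hφ', hψ'])
  let β : LinearMap.ker s →ₗ[R] LinearMap.ker t :=
    LinearMap.codRestrict _ (ψ ∘ₗ (LinearMap.ker s).subtype) (by intro v; simp [hψ'])
  let γ : LinearMap.ker t →ₗ[R] LinearMap.ker s :=
    LinearMap.codRestrict _ (φ ∘ₗ (LinearMap.ker t).subtype) (by intro v; simp [hφ'])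
  refine Module.Projective.of_split ((LinearMap.ker t).subtype.prod γ) (α.coprod β) ?_
  refine LinearMap.ext fun v => Subtype.ext ?_
  exact sub_add_cancel v.1 (ψ (φ v.1))

/-- The inclusion valid for every short exact sequence. -/
theorem fittingIdeal0_mul_le {R : Type*} [CommRing R] {A B P : Type*} [AddCommGroup A] [Module R A]
    [AddCommGroup B] [Module R B] [AddCommGroup P] [Module R P] (f : A →ₗ[R] B) (g : B →ₗ[R] P)
    (hg : Function.Surjective g) (hfg : Function.Exact f g) :
    fittingIdeal0 R A * fittingIdeal0 R P ≤ fittingIdeal0 R B := by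
  rw [fittingIdeal0, fittingIdeal0, Ideal.span_mul_span', Ideal.span_le]
  rintro _ ⟨_, ⟨m, πA, U, hA, hU, rfl⟩, _, ⟨n, πP, V, hP, hV, rfl⟩, rfl⟩
  obtain ⟨ρ, hρ⟩ := Module.projective_lifting_property g πP hg
  have hρ' : ∀ v, g (ρ v) = πP v := fun v => LinearMap.congr_fun hρ v
  have hc : ∀ j, ∃ c : Fin m → R, f (πA c) = - ρ (fun i => V i j) := by
    intro j
    obtain ⟨a, ha⟩ := (hfg (- ρ (fun i => V i j))).1 (by rw [map_neg, hρ', hV, neg_zero])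
    obtain ⟨c, rfl⟩ := hA a
    exact ⟨c, ha⟩
  choose c hc using hc
  have := det_mem_fittingIdeal0 (M := B)
    (((f ∘ₗ πA).coprod ρ) ∘ₗ (LinearEquiv.sumArrowLequivProdArrow (Fin m) (Fin n) R R).toLinearMap)
    (Matrix.fromBlocks U (Matrix.of fun i j => c j i) 0 V) ?_ ?_
  · rwa [Matrix.det_fromBlocks_zero₂₁] at this
  · rw [LinearMap.coe_comp]
    refine Function.Surjective.comp ?_
      (LinearEquiv.sumArrowLequivProdArrow (Fin m) (Fin n) R R).surjective
    intro b
    obtain ⟨v, hv⟩ := hP (g b)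
    obtain ⟨a, ha⟩ := (hfg (b - ρ v)).1 (by rw [map_sub, hρ', hv, sub_self])
    obtain ⟨u, rfl⟩ := hA a
    exact ⟨(u, v), by simp [ha]⟩
  · rintro (j | j)
    · have h1 : (LinearEquiv.sumArrowLequivProdArrow (Fin m) (Fin n) R R)
          (fun i => Matrix.fromBlocks U (Matrix.of fun i j => c j i) 0 V i (Sum.inl j)) =
          (fun i => U i j, 0) := by
        ext i <;> simp
      simp [h1, hU]
    · have h1 : (LinearEquiv.sumArrowLequivProdArrow (Fin m) (Fin n) R R)
          (fun i => Matrix.fromBlocks U (Matrix.of fun i j => c j i) 0 V i (Sum.inr j)) =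
          (c j, fun i => V i j) := by
        ext i <;> simp
      simp [h1, hc]

/-- If `s • C` is the restriction of a matrix `D`, for a non-zero-divisor `s`, then modifying `U`
by `C` applied to the columns of `V` does not change `det (U; V)`. -/
theorem det_fromRows_eq_of_smul {R : Type*} [CommRing R] {ι κ : Type*} [Fintype ι] [DecidableEq ι]
    [Fintype κ] [DecidableEq κ] (U U' : Matrix ι (ι ⊕ κ) R) (V : Matrix κ (ι ⊕ κ) R)
    (D : Matrix ι κ R) {s : R} (hs : s ∈ R⁰) (h : s • U' = s • U - D * V) :
    (Matrix.fromRows U V).det = (Matrix.fromRows U' V).det := by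
  have h1 : Matrix.fromBlocks (s • (1 : Matrix ι ι R)) (-D) 0 (1 : Matrix κ κ R) *
      Matrix.fromRows U V =
      Matrix.fromBlocks (s • (1 : Matrix ι ι R)) 0 0 (1 : Matrix κ κ R) *
      Matrix.fromRows U' V := by
    rw [Matrix.fromBlocks_mul_fromRows, Matrix.fromBlocks_mul_fromRows]
    simp [h, sub_eq_add_neg]
  have h2 := congrArg Matrix.det h1
  rw [Matrix.det_mul, Matrix.det_mul, Matrix.det_fromBlocks_zero₂₁,
    Matrix.det_fromBlocks_zero₂₁, Matrix.det_smul, Matrix.det_one, Matrix.det_one, mul_one,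
    mul_one] at h2
  exact (mul_cancel_left_mem_nonZeroDivisors (pow_mem hs _)).1 h2

/-- Multiplicativity of the Fitting ideal when the quotient is torsion of projective dimension at
most one. -/
theorem fittingIdeal0_eq_mul {R : Type*} [CommRing R] {A B P : Type*} [AddCommGroup A] [Module R A]
    [AddCommGroup B] [Module R B] [AddCommGroup P] [Module R P] [Module.Finite R A]
    (f : A →ₗ[R] B) (g : B →ₗ[R] P) (hf : Function.Injective f)
    (hg : Function.Surjective g) (hfg : Function.Exact f g) (htP : Module.IsTorsion R P)
    (hpd : PdLeOne R P) :
    fittingIdeal0 R B = fittingIdeal0 R A * fittingIdeal0 R P := by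
  classical
  refine le_antisymm ?_ (fittingIdeal0_mul_le f g hg hfg)
  rw [fittingIdeal0, Ideal.span_le]
  rintro _ ⟨N, π, Q, hπ, hQ, rfl⟩
  obtain ⟨m, πA, hA⟩ := Module.Finite.exists_fin' R A
  have ht : Function.Surjective (g ∘ₗ π) := hg.comp hπ
  have hproj := hpd.projective_ker (g ∘ₗ π) ht
  -- `C v` expresses `-π v ∈ A` in the chosen generators of `A`, linearly in `v ∈ ker (g ∘ π)`.
  obtain ⟨C, hC⟩ : ∃ C : LinearMap.ker (g ∘ₗ π) →ₗ[R] (Fin m → R),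
      ∀ v, f (πA (C v)) = - π v.1 := by
    let eA := LinearEquiv.ofInjective f hf
    let h : LinearMap.ker (g ∘ₗ π) →ₗ[R] LinearMap.range f :=
      LinearMap.codRestrict _ (-(π ∘ₗ (LinearMap.ker (g ∘ₗ π)).subtype)) (by
        intro v
        have hv : g (π v.1) = 0 := v.2
        exact (hfg _).1 (by simp [hv]))
    obtain ⟨C, hC⟩ := Module.projective_lifting_property πA (eA.symm.toLinearMap ∘ₗ h) hA
    refine ⟨C, fun v => ?_⟩
    have h1 : πA (C v) = eA.symm (h v) := LinearMap.congr_fun hC v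
    have h2 : (eA (eA.symm (h v)) : B) = - π v.1 := by rw [LinearEquiv.apply_symm_apply]; rfl
    rw [h1, ← h2]
    rfl
  obtain ⟨s, hs, hsP⟩ := exists_nonZeroDivisor_smul_eq_zero htP
    fun i : Fin N => (g ∘ₗ π) (Pi.single i 1)
  let w : Fin N → LinearMap.ker (g ∘ₗ π) := fun i => ⟨s • Pi.single i 1, by
    rw [LinearMap.mem_ker, map_smul]; exact hsP i⟩
  let D : Matrix (Fin m) (Fin N) R := Matrix.of fun i k => C (w k) i
  have hD : ∀ v : LinearMap.ker (g ∘ₗ π), ∀ i, s * C v i = ∑ k, D i k * v.1 k := by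
    intro v i
    have h1 : s • v = ∑ k, v.1 k • w k := by
      apply Subtype.ext
      ext j
      simp [w, Finset.sum_apply, Pi.single_apply, mul_comm]
    have h2 := congrFun (congrArg C h1) i
    simpa [D, Finset.sum_apply, mul_comm] using h2
  -- The generators of `A` written in terms of those of `B`.
  choose c hc using fun i : Fin m => hπ (f (πA (Pi.single i 1)))
  let U : Matrix (Fin m) (Fin m ⊕ Fin N) R := Matrix.fromCols 1 0
  let V : Matrix (Fin N) (Fin m ⊕ Fin N) R :=
    Matrix.fromCols (Matrix.of fun k i => - c i k) Q
  have hUV : (Matrix.fromRows U V).det = Q.det := by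
    rw [Matrix.fromRows_fromCols_eq_fromBlocks, Matrix.det_fromBlocks_zero₁₂, Matrix.det_one,
      one_mul]
  have hrel : ∀ j, f (πA fun i => U i j) + π (fun k => V k j) = 0 := by
    rintro (j | j)
    · have h1 : (fun i => U i (Sum.inl j)) = Pi.single j 1 := by
        ext i; simp [U, Matrix.one_apply, Pi.single_apply]
      have h2 : (fun k => V k (Sum.inl j)) = - c j := by ext k; simp [V]
      rw [h1, h2, map_neg, hc, add_neg_cancel]
    · have h1 : (fun i => U i (Sum.inr j)) = 0 := by ext i; simp [U]
      have h2 : (fun k => V k (Sum.inr j)) = fun k => Q k j := by ext k; simp [V]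
      rw [h1, h2, hQ, map_zero, map_zero, add_zero]
  have hVker : ∀ j, (fun k => V k j) ∈ LinearMap.ker (g ∘ₗ π) := by
    intro j
    have h1 := congrArg g (hrel j)
    rw [map_add, hfg.apply_apply_eq_zero, zero_add, map_zero] at h1
    exact h1
  let U' : Matrix (Fin m) (Fin m ⊕ Fin N) R := Matrix.of fun i j => U i j - C ⟨_, hVker j⟩ i
  have hU' : ∀ j, πA (fun i => U' i j) = 0 := by
    intro j
    apply hf
    have h1 : (fun i => U' i j) = (fun i => U i j) - C ⟨_, hVker j⟩ := rfl
    rw [h1, map_sub, map_sub, hC, sub_neg_eq_add, hrel, map_zero]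
  have hdet : (Matrix.fromRows U V).det = (Matrix.fromRows U' V).det := by
    refine det_fromRows_eq_of_smul U U' V D hs ?_
    ext i j
    have h1 := hD ⟨_, hVker j⟩ i
    simp only [Matrix.smul_apply, Matrix.sub_apply, Matrix.mul_apply, smul_eq_mul, U',
      Matrix.of_apply, mul_sub, h1]
  rw [← hUV, hdet]
  exact det_fromRows_mem_mul U' V _ _
    (fun e => det_mem_fittingIdeal0 πA _ hA fun j => hU' (e j))
    (fun e => det_mem_fittingIdeal0 (g ∘ₗ π) _ ht fun j => hVker (e j))

/-- For a short exact sequence `0 → M → M' → M'' → 0` of finitely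
presented torsion `R`-modules with `pd_R(M') ≤ 1`, one has
`Fitt_R(M) = Fitt_R(M') ⋅ Fitt^{[1]}_R(M'')`, where Kataoka's first shifted Fitting ideal
`Fitt^{[1]}_R(M'') = Fitt_R(X₁)⁻¹ ⋅ Fitt_R(N')` is computed from any resolution
`0 → N' → X₁ → M'' → 0` with `X₁` finitely presented torsion of projective dimension `≤ 1`;
equivalently (clearing the invertible denominator `Fitt_R(X₁)`):
`Fitt_R(M) ⋅ Fitt_R(X₁) = Fitt_R(M') ⋅ Fitt_R(N')` for every such resolution. -/
theorem fittingIdeal_mul_shifted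
    (R : Type*) [CommRing R]
    (M M' M'' : Type*) [AddCommGroup M] [Module R M] [AddCommGroup M'] [Module R M']
    [AddCommGroup M''] [Module R M'']
    [Module.FinitePresentation R M] [Module.FinitePresentation R M']
    [Module.FinitePresentation R M'']
    (htM : Module.IsTorsion R M) (htM' : Module.IsTorsion R M')
    (htM'' : Module.IsTorsion R M'')
    (f : M →ₗ[R] M') (g : M' →ₗ[R] M'')
    (hf : Function.Injective f) (hg : Function.Surjective g)
    (hexact : Function.Exact f g)
    (hpd : PdLeOne R M') :
    ∀ (N' X₁ : Type) (_ : AddCommGroup N') (_ : AddCommGroup X₁),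
      ∀ (_ : Module R N') (_ : Module R X₁),
        Module.FinitePresentation R N' → Module.FinitePresentation R X₁ →
        Module.IsTorsion R N' → Module.IsTorsion R X₁ → PdLeOne R X₁ →
        ∀ (ι : N' →ₗ[R] X₁) (q : X₁ →ₗ[R] M''),
          Function.Injective ι → Function.Surjective q → Function.Exact ι q →
          fittingIdeal0 R M * fittingIdeal0 R X₁ =
            fittingIdeal0 R M' * fittingIdeal0 R N' := by
  intro N' X₁ _ _ _ _ hfpN' _ _ htX hpdX ι q hι hq hιq
  let Y := LinearMap.eqLocus (g ∘ₗ LinearMap.fst R M' X₁) (q ∘ₗ LinearMap.snd R M' X₁)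
  have hY : ∀ y : Y, g y.1.1 = q y.1.2 := fun y => y.2
  let i₁ : M →ₗ[R] Y := LinearMap.codRestrict Y (LinearMap.inl R M' X₁ ∘ₗ f) (by
    intro x
    change g (f x) = q 0
    rw [hexact.apply_apply_eq_zero, map_zero])
  let i₂ : N' →ₗ[R] Y := LinearMap.codRestrict Y (LinearMap.inr R M' X₁ ∘ₗ ι) (by
    intro x
    change g 0 = q (ι x)
    rw [hιq.apply_apply_eq_zero, map_zero])
  let p₁ : Y →ₗ[R] M' := LinearMap.fst R M' X₁ ∘ₗ Y.subtype
  let p₂ : Y →ₗ[R] X₁ := LinearMap.snd R M' X₁ ∘ₗ Y.subtype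
  have h₁ : fittingIdeal0 R Y = fittingIdeal0 R M * fittingIdeal0 R X₁ := by
    refine fittingIdeal0_eq_mul i₁ p₂ ?_ ?_ ?_ htX hpdX
    · intro x y hxy
      exact hf (congrArg (fun z : Y => z.1.1) hxy)
    · intro x
      obtain ⟨y, hy⟩ := hg (q x)
      exact ⟨⟨(y, x), hy⟩, rfl⟩
    · intro y
      constructor
      · intro h0
        have h0' : y.1.2 = 0 := h0
        obtain ⟨x, hx⟩ := (hexact y.1.1).1 (by rw [hY, h0', map_zero])
        exact ⟨x, Subtype.ext (Prod.ext hx h0'.symm)⟩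
      · rintro ⟨x, rfl⟩
        rfl
  have h₂ : fittingIdeal0 R Y = fittingIdeal0 R N' * fittingIdeal0 R M' := by
    refine fittingIdeal0_eq_mul i₂ p₁ ?_ ?_ ?_ htM' hpd
    · intro x y hxy
      exact hι (congrArg (fun z : Y => z.1.2) hxy)
    · intro y
      obtain ⟨x, hx⟩ := hq (g y)
      exact ⟨⟨(y, x), hx.symm⟩, rfl⟩
    · intro y
      constructor
      · intro h0
        have h0' : y.1.1 = 0 := h0
        obtain ⟨x, hx⟩ := (hιq y.1.2).1 (by rw [← hY, h0', map_zero])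
        exact ⟨x, Subtype.ext (Prod.ext h0'.symm hx)⟩
      · rintro ⟨x, rfl⟩
        rfl
  rw [← h₁, h₂, mul_comm]
end

section
/- With R = ℤ_p[G], G finite abelian, G_v = ⟨g₁⟩ × ⋯ × ⟨g_r⟩ a subgroup, β_i = g_i − 1, α_i = N(⟨g_i⟩): there is an exact sequence of R-modules R^{r(r+1)/2} →^{A_r} R^r →^f R → ℤ_p[G/G_v] → 0, where f(e_i) = β_i and A_r is the matrix whose columns are the vectors α_i e_i (1 ≤ i ≤ r) and −β_j e_i + β_i e_j (1 ≤ i < j ≤ r). -/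
/-! Exactness at `R` and at the cokernel says only that the range of `f` is the ideal generated by
the `β i`.

Exactness at `R^r` is proved by enlarging, one index at a time, the set of indices on which a
syzygy `∑ j, x j * β j = 0` is supported. If the support lies in `insert i s`, then `x i * β i`
lies in the ideal `I` generated by the `β j` with `j ∈ s`. The key point is that this forces
`x i ∈ I + (α i)` (`exists_sub_mem_span_of_mul_mem`): the columns `α i e_i` and
`β j e_i - β i e_j` then allow one to cancel the `i`-th coordinate without leaving
`insert i s`.

For the key point, let `H` be the subgroup generated by the `g j`, `j ∈ s`. The kernel of the
projection `A[G] → A[G ⧸ H]` is contained in `I` (`mem_span_of_mapDomain_eq_zero`). By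
independence the image of `g i` in `G ⧸ H` has the same order as `g i`, so `α i` maps to the norm
element of the cyclic group generated by that image; and in a group algebra, the annihilator of
`q - 1`, for `q` of finite order, consists of the multiples of the norm element of `⟨q⟩`
(`exists_eq_mul_norm`). -/

/-! ### Annihilators in group algebras -/

/-- In the group algebra of a finite abelian group, the annihilator of `q - 1` is generated by the
norm element of the cyclic group `⟨q⟩`. -/
lemma exists_eq_mul_norm {A Q : Type*} [CommRing A] [CommGroup Q] [Finite Q] (q : Q)
    (z : MonoidAlgebra A Q) (hz : z * (MonoidAlgebra.of A Q q - 1) = 0) :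
    ∃ y, z = y * ∑ m ∈ Finset.range (orderOf q), MonoidAlgebra.of A Q (q ^ m) := by
  classical
  have hinv : ∀ c, z.coeff (c * q⁻¹) = z.coeff c := by
    intro c
    have h := congrArg (fun w => w.coeff c) hz
    simpa [mul_sub, sub_eq_zero, MonoidAlgebra.of_apply, MonoidAlgebra.coeff_mul_single_apply]
      using h
  have hinvm : ∀ (m : ℕ) c, z.coeff (c * (q ^ m)⁻¹) = z.coeff c := by
    intro m
    induction m with
    | zero => simp
    | succ k ih =>
      intro c
      rw [pow_succ, mul_inv, ← mul_assoc, hinv, ih]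
  -- `t c` is a chosen representative of the coset `c⟨q⟩`; `y` keeps the coefficients of `z` at
  -- the representatives and drops the others.
  let t : Q → Q := fun c => (QuotientGroup.mk (s := Subgroup.zpowers q) c).out
  have ht : ∀ c (m : ℕ), t (c * (q ^ m)⁻¹) = t c := by
    intro c m
    have : (QuotientGroup.mk (s := Subgroup.zpowers q) (c * (q ^ m)⁻¹)) = QuotientGroup.mk c := by
      rw [QuotientGroup.eq]
      simp
    simp only [t, this]
  let y : MonoidAlgebra A Q := .ofCoeff (z.coeff.filter fun c => t c = c)
  refine ⟨y, ?_⟩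
  ext c
  have hy : ∀ m : ℕ, (y * MonoidAlgebra.of A Q (q ^ m)).coeff c =
      if t c = c * (q ^ m)⁻¹ then z.coeff c else 0 := by
    intro m
    rw [MonoidAlgebra.of_apply, MonoidAlgebra.coeff_mul_single_apply, mul_one]
    simp only [y, Finsupp.filter_apply, ht, hinvm]
  rw [Finset.mul_sum, MonoidAlgebra.coeff_sum, Finset.sum_apply']
  simp only [hy]
  obtain ⟨m, hm, hmc⟩ : ∃ m < orderOf q, q ^ m = (t c)⁻¹ * c := by
    have h : (t c)⁻¹ * c ∈ Subgroup.zpowers q :=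
      QuotientGroup.eq.1 (QuotientGroup.out_eq' (QuotientGroup.mk (s := Subgroup.zpowers q) c))
    rw [(isOfFinOrder_of_finite q).mem_zpowers_iff_mem_range_orderOf] at h
    simpa using h
  rw [Finset.sum_eq_single m]
  · rw [if_pos]
    rw [hmc]; group
  · intro k hk hkm
    rw [if_neg]
    intro hc
    apply hkm
    refine pow_injOn_Iio_orderOf (by simpa using hk) hm ?_
    change q ^ k = q ^ m
    rw [hmc, hc]; group
  · intro h
    exact absurd (Finset.mem_range.2 hm) h

/-- The kernel of `A[G] → A[G ⧸ H]`, with `H` the subgroup generated by `S`, is contained in any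
ideal containing all `g - 1` for `g ∈ S`. -/
lemma mem_span_of_mapDomain_eq_zero {A G : Type*} [CommRing A] [CommGroup G] (S : Set G)
    (I : Ideal (MonoidAlgebra A G)) (hI : ∀ h ∈ S, MonoidAlgebra.of A G h - 1 ∈ I)
    (x : MonoidAlgebra A G)
    (hx : MonoidAlgebra.mapDomainRingHom A (QuotientGroup.mk' (Subgroup.closure S)) x = 0) :
    x ∈ I := by
  have hH : ∀ h ∈ Subgroup.closure S, MonoidAlgebra.of A G h - 1 ∈ I := by
    intro h hh
    induction hh using Subgroup.closure_induction with
    | mem h hh => exact hI h hh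
    | one => rw [map_one, sub_self]; exact I.zero_mem
    | mul a b _ _ ha hb =>
      have : MonoidAlgebra.of A G (a * b) - 1 =
          MonoidAlgebra.of A G a * (MonoidAlgebra.of A G b - 1) + (MonoidAlgebra.of A G a - 1) := by
        rw [map_mul]; ring
      rw [this]
      exact I.add_mem (I.mul_mem_left _ hb) ha
    | inv a _ ha =>
      have : MonoidAlgebra.of A G a⁻¹ - 1 =
          -(MonoidAlgebra.of A G a⁻¹) * (MonoidAlgebra.of A G a - 1) := by
        have h1 : MonoidAlgebra.of A G a⁻¹ * MonoidAlgebra.of A G a = 1 := by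
          rw [← map_mul, inv_mul_cancel, map_one]
        linear_combination h1
      rw [this]
      exact I.mul_mem_left _ ha
  -- Modulo `I`, every `x` agrees with the lift of its image along a set-theoretic section.
  have key : ∀ x : MonoidAlgebra A G, x - MonoidAlgebra.mapDomain Quotient.out
      (MonoidAlgebra.mapDomainRingHom A (QuotientGroup.mk' (Subgroup.closure S)) x) ∈ I := by
    intro x
    induction x using MonoidAlgebra.induction_linear with
    | zero => simp
    | add a b ha hb =>
      rw [map_add, MonoidAlgebra.mapDomain_add, add_sub_add_comm]
      exact I.add_mem ha hb
    | single a c =>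
      simp only [MonoidAlgebra.mapDomainRingHom_apply, MonoidAlgebra.mapDomain_single,
        QuotientGroup.coe_mk']
      set u : G := (QuotientGroup.mk (s := Subgroup.closure S) a).out with hu
      have h : u⁻¹ * a ∈ Subgroup.closure S :=
        QuotientGroup.eq.1 (QuotientGroup.out_eq' (QuotientGroup.mk a))
      have e : MonoidAlgebra.single a c - MonoidAlgebra.single u c =
          MonoidAlgebra.single u c * (MonoidAlgebra.of A G (u⁻¹ * a) - 1) := by
        simp [mul_sub, MonoidAlgebra.of_apply, MonoidAlgebra.single_mul_single]
      rw [e]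
      exact I.mul_mem_left _ (hH _ h)
  simpa [hx] using key x

/-- If `⟨g⟩` meets the subgroup generated by `S` trivially, then modulo the ideal `I` generated by
the `h - 1`, `h ∈ S`, the annihilator of `g - 1` is generated by the norm element of `⟨g⟩`. -/
lemma exists_sub_mem_span_of_mul_mem {A G : Type*} [CommRing A] [CommGroup G] [Finite G]
    (S : Set G) (g : G) (hg : ∀ k : ℕ, g ^ k ∈ Subgroup.closure S → g ^ k = 1)
    (x : MonoidAlgebra A G)
    (hx : x * (MonoidAlgebra.of A G g - 1) ∈
      Ideal.span ((fun h => MonoidAlgebra.of A G h - 1) '' S)) :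
    ∃ y, x - y * ∑ m ∈ Finset.range (orderOf g), MonoidAlgebra.of A G (g ^ m) ∈
      Ideal.span ((fun h => MonoidAlgebra.of A G h - 1) '' S) := by
  set π := MonoidAlgebra.mapDomainRingHom A (QuotientGroup.mk' (Subgroup.closure S)) with hπ
  have hof : ∀ a, π (MonoidAlgebra.of A G a) =
      MonoidAlgebra.of A (G ⧸ Subgroup.closure S) (QuotientGroup.mk a) := by
    intro a
    simp [hπ, MonoidAlgebra.of_apply]
  have hker : Ideal.span ((fun h => MonoidAlgebra.of A G h - 1) '' S) ≤ RingHom.ker π := by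
    rw [Ideal.span_le]
    rintro _ ⟨h, hh, rfl⟩
    have : (QuotientGroup.mk h : G ⧸ Subgroup.closure S) = 1 :=
      (QuotientGroup.eq_one_iff h).2 (Subgroup.subset_closure hh)
    change π _ = 0
    rw [map_sub, hof, this, map_one, map_one, sub_self]
  have hord : orderOf (QuotientGroup.mk g : G ⧸ Subgroup.closure S) = orderOf g := by
    apply Nat.dvd_antisymm
    · exact orderOf_map_dvd (QuotientGroup.mk' (Subgroup.closure S)) g
    · apply orderOf_dvd_of_pow_eq_one
      apply hg
      rw [← QuotientGroup.eq_one_iff, QuotientGroup.mk_pow, pow_orderOf_eq_one]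
  obtain ⟨y, hy⟩ := exists_eq_mul_norm (QuotientGroup.mk g : G ⧸ Subgroup.closure S) (π x) (by
    have h := hker hx
    rw [RingHom.mem_ker, map_mul, map_sub, hof, map_one] at h
    exact h)
  have hπs : ∀ y, π (MonoidAlgebra.mapDomain Quotient.out y) = y := by
    intro y
    induction y using MonoidAlgebra.induction_linear with
    | zero => simp
    | add a b ha hb => rw [MonoidAlgebra.mapDomain_add, map_add, ha, hb]
    | single a c => simp [hπ]
  refine ⟨MonoidAlgebra.mapDomain Quotient.out y, ?_⟩
  refine mem_span_of_mapDomain_eq_zero S _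
    (fun h hh => Ideal.subset_span
      (Set.mem_image_of_mem (fun h => MonoidAlgebra.of A G h - 1) hh)) _ ?_
  rw [← hπ, map_sub, map_mul, hπs, map_sum, hy, hord]
  simp only [hof, QuotientGroup.mk_pow, sub_self]

/-! ### Independence of the cyclic factors -/

/-- Independence of the cyclic factors: a power of `g i` lying in the subgroup generated by the
`g j`, `j ∈ s`, with `i ∉ s`, is trivial. -/
lemma pow_eq_one_of_mem_closure {G ι : Type*} [CommGroup G] [Fintype ι] (g : ι → G)
    (hindep : Function.Injective
      (fun x : (∀ i : ι, Subgroup.zpowers (g i)) => ∏ i, ((x i : G))))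
    (s : Set ι) (i : ι) (hi : i ∉ s) (k : ℕ) (hk : g i ^ k ∈ Subgroup.closure (g '' s)) :
    g i ^ k = 1 := by
  classical
  have hprod : ∀ h ∈ Subgroup.closure (g '' s), ∃ x : (∀ j : ι, Subgroup.zpowers (g j)),
      x i = 1 ∧ ∏ j, ((x j : G)) = h := by
    intro h hh
    induction hh using Subgroup.closure_induction with
    | mem h hh =>
      obtain ⟨j, hj, rfl⟩ := hh
      have hij : i ≠ j := fun h => hi (h ▸ hj)
      refine ⟨Pi.mulSingle j ⟨g j, Subgroup.mem_zpowers _⟩, Pi.mulSingle_eq_of_ne hij _, ?_⟩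
      rw [Fintype.prod_eq_single j]
      · simp
      · intro l hl; simp [Pi.mulSingle_eq_of_ne hl]
    | one => exact ⟨1, rfl, by simp⟩
    | mul a b _ _ ha hb =>
      obtain ⟨x, hx, rfl⟩ := ha
      obtain ⟨y, hy, rfl⟩ := hb
      exact ⟨x * y, by simp [hx, hy], by simp [Finset.prod_mul_distrib]⟩
    | inv a _ ha =>
      obtain ⟨x, hx, rfl⟩ := ha
      exact ⟨x⁻¹, by simp [hx], by simp⟩
  obtain ⟨x, hx, hxk⟩ := hprod _ hk
  have h : x = Pi.mulSingle i ⟨g i ^ k, Subgroup.npow_mem_zpowers _ _⟩ := by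
    apply hindep
    change ∏ j, ((x j : G)) = ∏ j, _
    rw [hxk, Fintype.prod_eq_single i]
    · simp
    · intro l hl; simp [Pi.mulSingle_eq_of_ne hl]
  rw [h, Pi.mulSingle_eq_same] at hx
  simpa using congrArg Subtype.val hx

/-! ### Syzygies -/

/-- Assuming `α i * β i = 0`, the syzygies of `β` are generated by the vectors `α i e_i`
and the Koszul relations as soon as
`x * β i ∈ (β j : j ∈ s)` forces `x ∈ (α i) + (β j : j ∈ s)` for all `i ∉ s`. -/
lemma syzygy_mem {R ι : Type*} [CommRing R] [Fintype ι] [DecidableEq ι] (β α : ι → R)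
    (M : Submodule R (ι → R)) (hαβ : ∀ i, α i * β i = 0)
    (h1 : ∀ i, Pi.single i (α i) ∈ M)
    (h2 : ∀ i j, i ≠ j → Pi.single i (β j) - Pi.single j (β i) ∈ M)
    (hann : ∀ (s : Finset ι) i, i ∉ s → ∀ x, x * β i ∈ Ideal.span (β '' s) →
      ∃ y, x - y * α i ∈ Ideal.span (β '' s))
    (s : Finset ι) (x : ι → R) (hs : ∀ i ∉ s, x i = 0) (hx : ∑ i, x i * β i = 0) : x ∈ M := by
  induction s using Finset.induction_on generalizing x with
  | empty =>
    have : x = 0 := funext fun i => hs i (by simp)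
    rw [this]; exact M.zero_mem
  | insert i s hi ih =>
    have hxi : x i * β i ∈ Ideal.span (β '' s) := by
      rw [← Finset.add_sum_erase _ _ (Finset.mem_univ i)] at hx
      rw [eq_neg_of_add_eq_zero_left hx]
      refine neg_mem (Ideal.sum_mem _ fun j hj => ?_)
      by_cases hjs : j ∈ s
      · exact Ideal.mul_mem_left _ _ (Ideal.subset_span ⟨j, hjs, rfl⟩)
      · rw [hs j (by simp [hjs, Finset.ne_of_mem_erase hj]), zero_mul]
        exact zero_mem _
    obtain ⟨y, hy⟩ := hann s i hi _ hxi
    obtain ⟨c, hc⟩ := (Submodule.mem_span_image_finset_iff_exists_fun' R).1 hy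
    -- The combination of columns with `i`-th coordinate `x i`.
    set w : ι → R := y • Pi.single i (α i) +
      ∑ j ∈ s, c j • (Pi.single i (β j) - Pi.single j (β i)) with hw
    have hwM : w ∈ M := by
      refine M.add_mem (M.smul_mem _ (h1 i)) (M.sum_mem fun j hj => M.smul_mem _ (h2 i j ?_))
      rintro rfl; exact hi hj
    have hwβ : ∑ l, w l * β l = 0 := by
      let φ : (ι → R) →ₗ[R] R := ∑ l, (LinearMap.proj l).smulRight (β l)
      have hφ : ∀ v, φ v = ∑ l, v l * β l := by intro v; simp [φ]
      have hφs : ∀ l a, φ (Pi.single l a) = a * β l := by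
        intro l a
        rw [hφ, Fintype.sum_eq_single l]
        · simp
        · intro m hm; simp [hm]
      rw [← hφ, hw, map_add, map_smul, map_sum, hφs, hαβ, smul_zero, zero_add]
      refine Finset.sum_eq_zero fun j _ => ?_
      rw [map_smul, map_sub, hφs, hφs, mul_comm, sub_self, smul_zero]
    have hwi : w i = x i := by
      have : ∑ j ∈ s, (c j • (Pi.single i (β j) - Pi.single j (β i)) : ι → R) i =
          ∑ j ∈ s, c j • β j := by
        refine Finset.sum_congr rfl fun j hj => ?_
        have : i ≠ j := by rintro rfl; exact hi hj
        simp [this]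
      rw [hw, Pi.add_apply, Finset.sum_apply, this, hc]
      simp
    have hws : ∀ l, l ≠ i → l ∉ s → w l = 0 := by
      intro l hl hls
      rw [hw, Pi.add_apply, Finset.sum_apply, Finset.sum_eq_zero]
      · simp [hl]
      · intro j hj
        have : l ≠ j := by rintro rfl; exact hls hj
        simp [hl, this]
    have hsub : x - w ∈ M := by
      apply ih
      · intro l hl
        by_cases hli : l = i
        · rw [hli, Pi.sub_apply, hwi, sub_self]
        · rw [Pi.sub_apply, hws l hli hl, hs l (by simp [hli, hl]), sub_self]
      · simp only [Pi.sub_apply, sub_mul, Finset.sum_sub_distrib, hx, hwβ, sub_self]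
    simpa using M.add_mem hsub hwM

/-! ### The exact sequence -/

/-- With `R = ℤ_p[G]`, `G` finite abelian, and a subgroup
`G_v = ⟨g₁⟩ × ⋯ × ⟨g_r⟩` (internal direct product), `β_i = g_i − 1`, `α_i = N(⟨g_i⟩)`,
there is an exact sequence of `R`-modules
`R^{r(r+1)/2} →^{A_r} R^r →^f R → ℤ_p[G/G_v] → 0`, where `f(e_i) = β_i`,
`ℤ_p[G/G_v] ≅ R/(β₁,…,β_r)`, and the columns of `A_r` are the vectors `α_i e_i`
(`1 ≤ i ≤ r`, index type `Fin r`) and `−β_j e_i + β_i e_j` (`1 ≤ i < j ≤ r`,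
index type the set of pairs `i < j`, of cardinality `r(r-1)/2`). -/
theorem ritterWeiss_four_term_exact
    (p : ℕ) [Fact p.Prime]
    (G : Type*) [CommGroup G] [Fintype G]
    (r : ℕ) (g : Fin r → G)
    (hindep : Function.Injective
      (fun x : (∀ i : Fin r, Subgroup.zpowers (g i)) => ∏ i, ((x i : G))))
    (β α : Fin r → MonoidAlgebra ℤ_[p] G)
    (hβ : ∀ i, β i = MonoidAlgebra.of ℤ_[p] G (g i) - 1)
    (hα : ∀ i, α i = ∑ m ∈ Finset.range (orderOf (g i)),
      MonoidAlgebra.of ℤ_[p] G ((g i) ^ m))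
    -- the columns of the matrix `A_r`
    (col : (Fin r ⊕ {q : Fin r × Fin r // q.1 < q.2}) → (Fin r → MonoidAlgebra ℤ_[p] G))
    (hcol₁ : ∀ i : Fin r, col (Sum.inl i) = Pi.single i (α i))
    (hcol₂ : ∀ q : {q : Fin r × Fin r // q.1 < q.2},
      col (Sum.inr q) = Pi.single q.1.1 (-(β q.1.2)) + Pi.single q.1.2 (β q.1.1))
    -- the linear maps `A_r` and `f`
    (Amap : ((Fin r ⊕ {q : Fin r × Fin r // q.1 < q.2}) → MonoidAlgebra ℤ_[p] G)
      →ₗ[MonoidAlgebra ℤ_[p] G] (Fin r → MonoidAlgebra ℤ_[p] G))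
    (hAmap : Amap = ∑ c, (LinearMap.proj c).smulRight (col c))
    (f : (Fin r → MonoidAlgebra ℤ_[p] G) →ₗ[MonoidAlgebra ℤ_[p] G] MonoidAlgebra ℤ_[p] G)
    (hf : f = ∑ i, (LinearMap.proj i).smulRight (β i)) :
    Function.Exact Amap f ∧
      Function.Exact f (Ideal.span (Set.range β)).mkQ ∧
      Function.Surjective (Ideal.span (Set.range β)).mkQ := by
  classical
  have hfx : ∀ x, f x = ∑ i, x i * β i := by intro x; simp [hf]
  have hαβ : ∀ i, α i * β i = 0 := by
    intro i
    rw [hα, hβ]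
    simp only [map_pow]
    rw [geom_sum_mul, ← map_pow, pow_orderOf_eq_one, map_one, sub_self]
  have hcolmem : ∀ c, col c ∈ LinearMap.range Amap := by
    intro c
    refine ⟨Pi.single c 1, ?_⟩
    rw [hAmap, LinearMap.sum_apply, Fintype.sum_eq_single c]
    · simp
    · intro d hd; simp [hd]
  have hcolf : ∀ c, f (col c) = 0 := by
    have hfs : ∀ l a, f (Pi.single l a) = a * β l := by
      intro l a
      rw [hfx, Fintype.sum_eq_single l]
      · simp
      · intro m hm; simp [hm]
    rintro (i | q)
    · rw [hcol₁, hfs, hαβ]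
    · rw [hcol₂, map_add, hfs, hfs]; ring
  refine ⟨?_, ?_, Submodule.mkQ_surjective _⟩
  · intro x
    constructor
    · intro hx
      rw [hfx] at hx
      refine syzygy_mem β α (LinearMap.range Amap) hαβ (fun i => hcol₁ i ▸ hcolmem _) ?_ ?_
        Finset.univ x (by simp) hx
      · intro i j hij
        -- Columns exist only for pairs `i < j`; both orders agree up to sign.
        rcases lt_or_gt_of_ne hij with h | h
        · have := (LinearMap.range Amap).neg_mem (hcolmem (Sum.inr ⟨(i, j), h⟩))
          rw [hcol₂] at this
          convert this using 1
          simp only [Pi.single_neg]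
          abel
        · have := hcolmem (Sum.inr ⟨(j, i), h⟩)
          rw [hcol₂] at this
          convert this using 1
          simp only [Pi.single_neg]
          abel
      · intro s i hi x hx
        have hset : β '' s = (fun h => MonoidAlgebra.of ℤ_[p] G h - 1) '' (g '' s) := by
          rw [Set.image_image]
          exact Set.image_congr fun j _ => hβ j
        rw [hset, hβ] at hx
        rw [hset, hα]
        exact exists_sub_mem_span_of_mul_mem (g '' s) (g i)
          (fun k => pow_eq_one_of_mem_closure g hindep s i (by simpa using hi) k) x hx
    · rintro ⟨y, rfl⟩
      rw [hAmap, LinearMap.sum_apply, map_sum]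
      refine Finset.sum_eq_zero fun c _ => ?_
      rw [LinearMap.smulRight_apply, map_smul, hcolf, smul_zero]
  · rw [LinearMap.exact_iff, Submodule.ker_mkQ]
    ext x
    rw [Ideal.span, Submodule.mem_span_range_iff_exists_fun]
    simp [hfx, LinearMap.mem_range]
end
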